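/- For every τ in the upper half-plane H and every w ∈ ℂ, the following identity holds: θ₁(w, −1/τ) · θ₂(0, τ) = e^{πiτw²} · θ₁(0, −1/τ) · θ₂(τw, τ). (Equivalently, where the denominators are nonzero, θ₁(w,−1/τ)/θ₁(0,−1/τ) = e^{πiτw²} · θ₂(τw,τ)/θ₂(0,τ).) -/

import Mathlib

/-!
The Jacobi triple product expresses both infinite products through Mathlib's two-variable theta
series `jacobiTheta₂ z τ = ∑ e^{2πinz + πin²τ}`:
`jTheta2 v τ = jacobiTheta₂ (v - 1/2) τ` (`jTheta2_eq`) and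
`jTheta1 v τ = q^{1/8} e^{πiv} jacobiTheta₂ (v + τ/2) τ` (`jTheta1_eq`).
Mathlib's functional equation `jacobiTheta₂_functional_equation` (Poisson summation), applied at
`z = τw - 1/2`, then gives `e^{πiτw²} jTheta2 (τw) τ = K jTheta1 w (-1/τ)` with
`K = (-iτ)^{-1/2}` independent of `w` (`jTheta2_S`). Combining this equation for `w` with the one
for `w = 0` yields the identity.

The triple product is proved from its finite version `finite_triple_product`, whose coefficients
are Gaussian binomials. That version follows by induction on the number of factors, and dominated
convergence gives the limit (`jacobi_triple_product`).
-/

noncomputable section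

/-- `qpow τ x = e^{2πiτx}`, so that `qpow τ j = q^j` with `q = e^{2πiτ}`. -/
def qpow (τ x : ℂ) : ℂ := Complex.exp (2 * (Real.pi : ℂ) * Complex.I * τ * x)

/-- Jacobi theta function
`θ(v,τ) = 2 q^{1/8} sin(πv) ∏_{j=1}^∞ (1−q^j)(1−e^{2πiv}q^j)(1−e^{−2πiv}q^j)`. -/
def jTheta (v τ : ℂ) : ℂ :=
  2 * qpow τ (1/8) * Complex.sin ((Real.pi : ℂ) * v) *
    ∏' j : ℕ, ((1 - qpow τ ((j : ℂ) + 1)) *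
      (1 - Complex.exp (2 * (Real.pi : ℂ) * Complex.I * v) * qpow τ ((j : ℂ) + 1)) *
      (1 - Complex.exp (-(2 * (Real.pi : ℂ) * Complex.I * v)) * qpow τ ((j : ℂ) + 1)))

/-- Jacobi theta function
`θ₁(v,τ) = 2 q^{1/8} cos(πv) ∏_{j=1}^∞ (1−q^j)(1+e^{2πiv}q^j)(1+e^{−2πiv}q^j)`. -/
def jTheta1 (v τ : ℂ) : ℂ :=
  2 * qpow τ (1/8) * Complex.cos ((Real.pi : ℂ) * v) *
    ∏' j : ℕ, ((1 - qpow τ ((j : ℂ) + 1)) *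
      (1 + Complex.exp (2 * (Real.pi : ℂ) * Complex.I * v) * qpow τ ((j : ℂ) + 1)) *
      (1 + Complex.exp (-(2 * (Real.pi : ℂ) * Complex.I * v)) * qpow τ ((j : ℂ) + 1)))

/-- Jacobi theta function
`θ₂(v,τ) = ∏_{j=1}^∞ (1−q^j)(1−e^{2πiv}q^{j−1/2})(1−e^{−2πiv}q^{j−1/2})`. -/
def jTheta2 (v τ : ℂ) : ℂ :=
  ∏' j : ℕ, ((1 - qpow τ ((j : ℂ) + 1)) *
    (1 - Complex.exp (2 * (Real.pi : ℂ) * Complex.I * v) * qpow τ ((j : ℂ) + 1/2)) *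
    (1 - Complex.exp (-(2 * (Real.pi : ℂ) * Complex.I * v)) * qpow τ ((j : ℂ) + 1/2)))

/-- Jacobi theta function
`θ₃(v,τ) = ∏_{j=1}^∞ (1−q^j)(1+e^{2πiv}q^{j−1/2})(1+e^{−2πiv}q^{j−1/2})`. -/
def jTheta3 (v τ : ℂ) : ℂ :=
  ∏' j : ℕ, ((1 - qpow τ ((j : ℂ) + 1)) *
    (1 + Complex.exp (2 * (Real.pi : ℂ) * Complex.I * v) * qpow τ ((j : ℂ) + 1/2)) *
    (1 + Complex.exp (-(2 * (Real.pi : ℂ) * Complex.I * v)) * qpow τ ((j : ℂ) + 1/2)))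

/-- `θ'(0,τ) = ∂θ(v,τ)/∂v |_{v=0}`. -/
def jThetaDeriv (τ : ℂ) : ℂ := deriv (fun v => jTheta v τ) 0

end

open Filter Topology

/-! ### A finite form of the Jacobi triple product -/

/-- The finite `q`-Pochhammer symbol `(q; q)_m = (1 - q) (1 - q²) ⋯ (1 - q ^ m)`. -/
noncomputable def qPoch (q : ℂ) (m : ℕ) : ℂ := ∏ j ∈ Finset.range m, (1 - q ^ (j + 1))

/-- The reciprocal `1 / (q; q)_m`, extended by `0` to negative `m` (as for the reciprocal of the
Gamma function). With this convention `qPochInv_sub_one` holds for all integers `m`, so that sums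
over a finite range of exponents can be written as sums over `ℤ`. -/
noncomputable def qPochInv (q : ℂ) (m : ℤ) : ℂ := if m < 0 then 0 else (qPoch q m.toNat)⁻¹

lemma one_sub_pow_ne_zero {q : ℂ} (hq : ‖q‖ < 1) (j : ℕ) : 1 - q ^ (j + 1) ≠ 0 := by
  intro h
  have h1 : ‖q ^ (j + 1)‖ < 1 := by
    rw [norm_pow]; exact pow_lt_one₀ (norm_nonneg _) hq (by omega)
  rw [← sub_eq_zero.mp h] at h1
  simp at h1

lemma qPochInv_sub_one {q : ℂ} (hq : ‖q‖ < 1) (m : ℤ) :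
    qPochInv q (m - 1) = (1 - q ^ m) * qPochInv q m := by
  rcases lt_trichotomy m 0 with h | h | h
  · simp [qPochInv, h, show m - 1 < 0 by omega]
  · simp [qPochInv, h]
  · obtain ⟨n, rfl⟩ : ∃ n : ℕ, m = n + 1 := ⟨(m - 1).toNat, by omega⟩
    have h1 : ¬ ((n : ℤ) + 1 < 0) := by omega
    have h2 : ((n : ℤ) + 1).toNat = n + 1 := by omega
    have h3 := one_sub_pow_ne_zero hq n
    have h4 : q ^ ((n : ℤ) + 1) = q ^ (n + 1) := by norm_cast
    simp only [qPochInv, add_sub_cancel_right, h1, h2, h4, if_false, Int.toNat_natCast,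
      show ¬ ((n : ℤ) < 0) by omega, qPoch, Finset.prod_range_succ, mul_inv]
    field_simp

/-- Finite triple product: with `q = p ^ 2`, the coefficient of `x ^ k` in
`∏_{j < n} (1 + x p ^ (2j+1)) (1 + x⁻¹ p ^ (2j+1))` is `p ^ (k ^ 2)` times the Gaussian binomial
coefficient `(q; q)_{2n} / ((q; q)_{n+k} (q; q)_{n-k})`. -/
lemma finite_triple_product {p x : ℂ} (hp0 : p ≠ 0) (hp : ‖p‖ < 1) (hx : x ≠ 0) (n : ℕ) :
    HasSum (fun k : ℤ ↦ qPoch (p ^ 2) (2 * n) * qPochInv (p ^ 2) (n + k) *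
        qPochInv (p ^ 2) (n - k) * (p ^ (k ^ 2) * x ^ k))
      (∏ j ∈ Finset.range n, (1 + x * p ^ (2 * j + 1)) * (1 + x⁻¹ * p ^ (2 * j + 1))) := by
  have hq : ‖p ^ 2‖ < 1 := by
    rw [norm_pow]; exact pow_lt_one₀ (norm_nonneg _) hp (by omega)
  induction n with
  | zero =>
    have := hasSum_single (f := fun k : ℤ ↦ qPoch (p ^ 2) (2 * 0) * qPochInv (p ^ 2) ((0 : ℕ) + k) *
        qPochInv (p ^ 2) ((0 : ℕ) - k) * (p ^ (k ^ 2) * x ^ k)) 0 (by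
      intro k hk
      rcases lt_or_gt_of_ne hk with h | h
      · simp [qPochInv, h]
      · simp [qPochInv, h])
    simpa [qPoch, qPochInv] using this
  | succ n ih =>
    have h1 := ((Equiv.subRight (1 : ℤ)).hasSum_iff).mpr ih
    have h2 := ((Equiv.addRight (1 : ℤ)).hasSum_iff).mpr ih
    -- The new factor is `1 + p ^ (4 * n + 2) + p ^ (2 * n + 1) * x + p ^ (2 * n + 1) * x⁻¹`; the
    -- last two terms shift the exponent of `x` by one.
    have h3 := (ih.mul_left (1 + p ^ (4 * n + 2))).add
      ((h1.mul_left (p ^ (2 * n + 1) * x)).add (h2.mul_left (p ^ (2 * n + 1) * x⁻¹)))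
    have congr_sum {f g : ℤ → ℂ} {a b : ℂ} (h : HasSum g a) (hf : ∀ k, f k = g k) (hb : b = a) :
        HasSum f b := by
      rw [funext hf, hb]; exact h
    refine congr_sum h3 (fun k ↦ ?_) ?_
    · have e1 : qPochInv (p ^ 2) (n + k) =
          (1 - (p ^ 2) ^ (n + 1 + k : ℤ)) * qPochInv (p ^ 2) (n + 1 + k) := by
        rw [← qPochInv_sub_one hq]; congr 1; ring
      have e2 : qPochInv (p ^ 2) (n - k) =
          (1 - (p ^ 2) ^ (n + 1 - k : ℤ)) * qPochInv (p ^ 2) (n + 1 - k) := by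
        rw [← qPochInv_sub_one hq]; congr 1; ring
      have e3 : qPochInv (p ^ 2) (n + (k - 1)) =
          (1 - (p ^ 2) ^ (n + k : ℤ)) * qPochInv (p ^ 2) (n + k) := by
        rw [← qPochInv_sub_one hq]; congr 1; ring
      have e4 : qPochInv (p ^ 2) (n - (k + 1)) =
          (1 - (p ^ 2) ^ (n - k : ℤ)) * qPochInv (p ^ 2) (n - k) := by
        rw [← qPochInv_sub_one hq]; congr 1; ring
      have e5 : (n : ℤ) - (k - 1) = n + 1 - k := by ring
      have e6 : (n : ℤ) + (k + 1) = n + 1 + k := by ring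
      have e7 : qPoch (p ^ 2) (2 * (n + 1)) =
          qPoch (p ^ 2) (2 * n) * (1 - (p ^ 2) ^ (2 * n + 1)) * (1 - (p ^ 2) ^ (2 * n + 2)) := by
        simp only [qPoch, show 2 * (n + 1) = 2 * n + 1 + 1 by ring, Finset.prod_range_succ]
      simp only [Function.comp_apply, Equiv.subRight_apply, Equiv.coe_addRight, Nat.cast_add,
        Nat.cast_one]
      rw [e3, e4, e5, e6, e1, e2, e7]
      have s1 : p ^ ((k - 1) ^ 2) = p ^ (k ^ 2) * (p ^ k)⁻¹ ^ 2 * p := by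
        rw [show (k - 1) ^ 2 = k ^ 2 + -k + -k + 1 by ring]
        simp only [zpow_add₀ hp0, zpow_neg, zpow_one]; ring
      have s2 : p ^ ((k + 1) ^ 2) = p ^ (k ^ 2) * (p ^ k) ^ 2 * p := by
        rw [show (k + 1) ^ 2 = k ^ 2 + k + k + 1 by ring]
        simp only [zpow_add₀ hp0, zpow_one]; ring
      have s3 (a : ℤ) : (p ^ 2) ^ a = (p ^ a) ^ 2 := by
        rw [← zpow_natCast, ← zpow_natCast, ← zpow_mul, ← zpow_mul, mul_comm]
      have hk := zpow_ne_zero k hp0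
      have hxk := zpow_ne_zero k hx
      rw [s1, s2]
      simp only [s3, zpow_add₀ hp0, zpow_sub₀ hp0, zpow_add₀ hx, zpow_sub₀ hx, zpow_one,
        zpow_natCast]
      generalize qPochInv (p ^ 2) (↑n + 1 + k) = A
      generalize qPochInv (p ^ 2) (↑n + 1 - k) = B
      generalize qPoch (p ^ 2) (2 * n) = C
      generalize p ^ (k ^ 2) = D
      generalize p ^ k = K at *
      generalize x ^ k = X at *
      field_simp
      ring
    · rw [Finset.prod_range_succ]
      generalize ∏ j ∈ Finset.range n, (1 + x * p ^ (2 * j + 1)) * (1 + x⁻¹ * p ^ (2 * j + 1)) = P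
      field_simp
      ring

/-! ### The Jacobi triple product -/

lemma tendsto_qPoch {q : ℂ} (hq : ‖q‖ < 1) :
    ∃ L : ℂ, L ≠ 0 ∧ Tendsto (qPoch q) atTop (𝓝 L) := by
  have hs : Summable fun n : ℕ ↦ ‖-q ^ (n + 1)‖ := by
    simp only [norm_neg, norm_pow]
    exact (summable_nat_add_iff 1).mpr (summable_geometric_of_lt_one (norm_nonneg _) hq)
  refine ⟨∏' j : ℕ, (1 + -q ^ (j + 1)), tprod_one_add_ne_zero_of_summable (fun j ↦ ?_) hs, ?_⟩
  · rw [← sub_eq_add_neg]; exact one_sub_pow_ne_zero hq j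
  · simpa only [funext fun m ↦ qPoch.eq_def q m, sub_eq_add_neg] using
      (multipliable_one_add_of_summable hs).hasProd.tendsto_prod_nat

lemma tendsto_qPochInv {q L : ℂ} (hL : L ≠ 0) (h : Tendsto (qPoch q) atTop (𝓝 L)) :
    Tendsto (qPochInv q) atTop (𝓝 L⁻¹) := by
  have h1 : Tendsto (fun m : ℤ ↦ (qPoch q m.toNat)⁻¹) atTop (𝓝 L⁻¹) :=
    Tendsto.inv₀ (h.comp (tendsto_atTop_atTop.mpr fun b : ℕ ↦ ⟨(b : ℤ), fun a ha ↦ by omega⟩ :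
      Tendsto Int.toNat atTop atTop)) hL
  refine h1.congr' ?_
  filter_upwards [eventually_ge_atTop 0] with m hm
  simp [qPochInv, not_lt.mpr hm]

lemma bounded_qPochInv {q L : ℂ} (hL : L ≠ 0) (h : Tendsto (qPoch q) atTop (𝓝 L)) :
    ∃ M : ℝ, ∀ m, ‖qPochInv q m‖ ≤ M := by
  obtain ⟨M, hM⟩ := (h.inv₀ hL).norm.bddAbove_range
  refine ⟨max M 0, fun m ↦ ?_⟩
  by_cases hm : m < 0
  · simp [qPochInv, hm]
  · simp only [qPochInv, hm, if_false]
    exact le_max_of_le_left (hM ⟨m.toNat, rfl⟩)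

/-- The Jacobi triple product, as a limit of partial products in terms of the nome
`p = e^{πiτ}` and `x = e^{2πiz}`. It is the limit of `finite_triple_product`: the Gaussian
binomials are uniformly bounded and tend to `1 / (q; q)_∞`, so dominated convergence applies. -/
theorem jacobi_triple_product {τ : ℂ} (hτ : 0 < τ.im) (z : ℂ) {p x : ℂ}
    (hp : p = Complex.exp (Real.pi * Complex.I * τ))
    (hx : x = Complex.exp (2 * Real.pi * Complex.I * z)) :
    Tendsto (fun n ↦ ∏ j ∈ Finset.range n, ((1 - p ^ (2 * j + 2)) *
      (1 + x * p ^ (2 * j + 1)) * (1 + x⁻¹ * p ^ (2 * j + 1)))) atTop (𝓝 (jacobiTheta₂ z τ)) := by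
  have hp0 : p ≠ 0 := hp ▸ Complex.exp_ne_zero _
  have hx0 : x ≠ 0 := hx ▸ Complex.exp_ne_zero _
  have hp1 : ‖p‖ < 1 := by
    rw [hp, Complex.norm_exp, Real.exp_lt_one_iff]
    simpa using mul_pos Real.pi_pos hτ
  have hq : ‖p ^ 2‖ < 1 := by
    rw [norm_pow]; exact pow_lt_one₀ (norm_nonneg _) hp1 (by omega)
  obtain ⟨L, hL, hLt⟩ := tendsto_qPoch hq
  obtain ⟨M, hM⟩ := bounded_qPochInv hL hLt
  obtain ⟨C, hC⟩ := hLt.norm.bddAbove_range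
  have hterm (k : ℤ) : p ^ (k ^ 2) * x ^ k = jacobiTheta₂_term k z τ := by
    rw [hp, hx, ← Complex.exp_int_mul, ← Complex.exp_int_mul, ← Complex.exp_add, jacobiTheta₂_term]
    congr 1; push_cast; ring
  have key : Tendsto (fun n : ℕ ↦ ∑' k : ℤ, qPoch (p ^ 2) (2 * n) * qPochInv (p ^ 2) (n + k) *
        qPochInv (p ^ 2) (n - k) * (p ^ (k ^ 2) * x ^ k)) atTop
      (𝓝 (∑' k : ℤ, L * L⁻¹ * L⁻¹ * (p ^ (k ^ 2) * x ^ k))) := by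
    have hC0 : 0 ≤ C := (norm_nonneg _).trans (hC ⟨0, rfl⟩)
    have hM0 : 0 ≤ M := (norm_nonneg _).trans (hM 0)
    refine tendsto_tsum_of_dominated_convergence
      (bound := fun k : ℤ ↦ C * M * M * ‖jacobiTheta₂_term k z τ‖) ?_ ?_ ?_
    · exact ((summable_jacobiTheta₂_term_iff z τ).mpr hτ).norm.mul_left _
    · intro k
      have t1 : Tendsto (fun n : ℕ ↦ (n : ℤ) + k) atTop atTop :=
        tendsto_atTop_add_const_right _ _ tendsto_natCast_atTop_atTop
      have t2 : Tendsto (fun n : ℕ ↦ (n : ℤ) - k) atTop atTop :=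
        tendsto_atTop_add_const_right _ _ tendsto_natCast_atTop_atTop
      have t3 : Tendsto (fun n : ℕ ↦ 2 * n) atTop atTop :=
        tendsto_id.const_mul_atTop' (by norm_num)
      have hi := tendsto_qPochInv hL hLt
      exact (((hLt.comp t3).mul (hi.comp t1)).mul (hi.comp t2)).mul_const _
    · refine Eventually.of_forall fun n k ↦ ?_
      rw [hterm, norm_mul, norm_mul, norm_mul]
      gcongr
      · exact hC ⟨2 * n, rfl⟩
      · exact hM _
      · exact hM _
  have h1 := hLt.mul key
  simp only [fun n ↦ (finite_triple_product hp0 hp1 hx0 n).tsum_eq] at h1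
  simp only [tsum_mul_left, hterm] at h1
  rw [show L * (L * L⁻¹ * L⁻¹ * ∑' k : ℤ, jacobiTheta₂_term k z τ) = jacobiTheta₂ z τ by
    rw [jacobiTheta₂]; field_simp] at h1
  refine h1.congr fun n ↦ ?_
  rw [qPoch, ← Finset.prod_mul_distrib]
  refine Finset.prod_congr rfl fun j _ ↦ ?_
  ring

/-! ### The theta products as values of `jacobiTheta₂` -/

lemma qpow_eq {τ p : ℂ} (hp : p = Complex.exp (Real.pi * Complex.I * τ)) (m : ℕ) (a : ℂ)
    (h : 2 * a = m) : qpow τ a = p ^ m := by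
  rw [hp, ← Complex.exp_nat_mul, ← h, qpow]
  congr 1; ring

lemma multipliable_aux {p : ℂ} (hp : ‖p‖ < 1) (a b c : ℂ) (k l m : ℕ) :
    Multipliable fun j : ℕ ↦ (1 + a * p ^ (2 * j + k)) * (1 + b * p ^ (2 * j + l)) *
      (1 + c * p ^ (2 * j + m)) := by
  have h (a : ℂ) (k : ℕ) : Multipliable fun j : ℕ ↦ 1 + a * p ^ (2 * j + k) := by
    refine multipliable_one_add_of_summable ?_
    have hq : ‖p‖ ^ 2 < 1 := pow_lt_one₀ (norm_nonneg _) hp (by omega)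
    refine ((summable_geometric_of_lt_one (by positivity) hq).mul_left (‖a‖ * ‖p‖ ^ k)).congr
      fun j ↦ ?_
    rw [norm_mul, norm_pow, pow_add, pow_mul]; ring
  exact ((h a k).mul (h b l)).mul (h c m)

lemma norm_nome_lt_one {τ : ℂ} (hτ : 0 < τ.im) :
    ‖Complex.exp (Real.pi * Complex.I * τ)‖ < 1 := by
  rw [Complex.norm_exp, Real.exp_lt_one_iff]
  simpa using mul_pos Real.pi_pos hτ

lemma jTheta2_eq {τ : ℂ} (hτ : 0 < τ.im) (v : ℂ) :
    jTheta2 v τ = jacobiTheta₂ (v - 1 / 2) τ := by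
  obtain ⟨p, hp⟩ : ∃ p, p = Complex.exp (Real.pi * Complex.I * τ) := ⟨_, rfl⟩
  obtain ⟨e, he⟩ : ∃ e, e = Complex.exp (2 * Real.pi * Complex.I * v) := ⟨_, rfl⟩
  have hx : -e = Complex.exp (2 * Real.pi * Complex.I * (v - 1 / 2)) := by
    rw [show 2 * Real.pi * Complex.I * (v - 1 / 2) =
      2 * Real.pi * Complex.I * v - Real.pi * Complex.I by ring, Complex.exp_sub,
      Complex.exp_pi_mul_I, he, div_neg, div_one]
  have hp1 : ‖p‖ < 1 := hp ▸ norm_nome_lt_one hτ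
  have h1 := jacobi_triple_product hτ (v - 1 / 2) hp hx
  have h2 := (multipliable_aux hp1 (-1) (-e) (-e)⁻¹ 2 1 1).tendsto_prod_tprod_nat
  rw [jTheta2, ← tendsto_nhds_unique h2 (h1.congr fun n ↦ ?_)]
  · refine tprod_congr fun j ↦ ?_
    rw [qpow_eq hp (2 * j + 2) _ (by push_cast; ring), qpow_eq hp (2 * j + 1) _ (by push_cast; ring),
      Complex.exp_neg, ← he, inv_neg]
    ring
  · refine Finset.prod_congr rfl fun j _ ↦ ?_
    ring

lemma jTheta1_eq {τ : ℂ} (hτ : 0 < τ.im) (v : ℂ) :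
    jTheta1 v τ = qpow τ (1 / 8) * Complex.exp (Real.pi * Complex.I * v) *
      jacobiTheta₂ (v + τ / 2) τ := by
  obtain ⟨p, hp⟩ : ∃ p, p = Complex.exp (Real.pi * Complex.I * τ) := ⟨_, rfl⟩
  obtain ⟨e, he⟩ : ∃ e, e = Complex.exp (2 * Real.pi * Complex.I * v) := ⟨_, rfl⟩
  have hp0 : p ≠ 0 := hp ▸ Complex.exp_ne_zero _
  have he0 : e ≠ 0 := he ▸ Complex.exp_ne_zero _
  have hx : e * p = Complex.exp (2 * Real.pi * Complex.I * (v + τ / 2)) := by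
    rw [he, hp, ← Complex.exp_add]
    congr 1; ring
  have hp1 : ‖p‖ < 1 := hp ▸ norm_nome_lt_one hτ
  have h1 := jacobi_triple_product hτ (v + τ / 2) hp hx
  have h2 := (multipliable_aux hp1 (-1) e e⁻¹ 2 2 2).tendsto_prod_tprod_nat
  -- Shifting the factors in `e⁻¹` by one index costs the boundary factors `1 + e⁻¹`
  -- and `1 + e⁻¹ * p ^ (2 * n)`, the latter tending to `1`.
  have h3 (n : ℕ) : (∏ j ∈ Finset.range n, ((1 - p ^ (2 * j + 2)) *
      (1 + e * p * p ^ (2 * j + 1)) * (1 + (e * p)⁻¹ * p ^ (2 * j + 1)))) *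
        (1 + e⁻¹ * p ^ (2 * n)) =
      (1 + e⁻¹) * ∏ j ∈ Finset.range n, ((1 + -1 * p ^ (2 * j + 2)) * (1 + e * p ^ (2 * j + 2)) *
      (1 + e⁻¹ * p ^ (2 * j + 2))) := by
    induction n with
    | zero => simp
    | succ n ih =>
      rw [Finset.prod_range_succ, Finset.prod_range_succ, ← mul_assoc (1 + e⁻¹), ← ih]
      have : (e * p)⁻¹ * p ^ (2 * n + 1) = e⁻¹ * p ^ (2 * n) := by
        rw [pow_succ]; field_simp
      rw [this]
      ring
  have h4 : Tendsto (fun n : ℕ ↦ 1 + e⁻¹ * p ^ (2 * n)) atTop (𝓝 1) := by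
    have hq : ‖p ^ 2‖ < 1 := by
      rw [norm_pow]; exact pow_lt_one₀ (norm_nonneg _) hp1 (by omega)
    simpa [pow_mul] using ((tendsto_pow_atTop_nhds_zero_of_norm_lt_one hq).const_mul e⁻¹).const_add 1
  have h5 := tendsto_nhds_unique ((h1.mul h4).congr h3) (h2.const_mul (1 + e⁻¹))
  have hcos : 2 * Complex.cos (Real.pi * v) =
      Complex.exp (Real.pi * Complex.I * v) * (1 + e⁻¹) := by
    rw [Complex.two_cos, he, ← Complex.exp_neg, mul_add, mul_one, ← Complex.exp_add]
    congr 2 <;> ring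
  rw [mul_one] at h5
  rw [h5, jTheta1, tprod_congr (g := fun j : ℕ ↦ (1 + -1 * p ^ (2 * j + 2)) *
    (1 + e * p ^ (2 * j + 2)) * (1 + e⁻¹ * p ^ (2 * j + 2))) fun j ↦ ?_]
  · linear_combination (qpow τ (1 / 8) * ∏' j : ℕ, (1 + -1 * p ^ (2 * j + 2)) *
      (1 + e * p ^ (2 * j + 2)) * (1 + e⁻¹ * p ^ (2 * j + 2))) * hcos
  · rw [qpow_eq hp (2 * j + 2) _ (by push_cast; ring), Complex.exp_neg, ← he]
    ring

/-! ### The transformation `τ ↦ -1/τ` -/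

/-- The functional equation of `jacobiTheta₂` at `z = τ w - 1/2`, for which
`z / τ = w + (-1/τ) / 2` is the argument occurring in `jTheta1_eq`. The constant does not depend
on `w`. -/
lemma jTheta2_S {τ : ℂ} (hτ : 0 < τ.im) (w : ℂ) :
    Complex.exp (Real.pi * Complex.I * τ * w ^ 2) * jTheta2 (τ * w) τ =
      1 / (-Complex.I * τ) ^ (1 / 2 : ℂ) * jTheta1 w (-1 / τ) := by
  have hτ0 : τ ≠ 0 := by rintro rfl; simp at hτ
  have hτ' : 0 < (-1 / τ).im := by
    rw [neg_div, one_div, Complex.neg_im, Complex.inv_im, neg_div, neg_neg]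
    exact div_pos hτ (Complex.normSq_pos.mpr hτ0)
  rw [jTheta2_eq hτ, jTheta1_eq hτ', jacobiTheta₂_functional_equation,
    show (τ * w - 1 / 2) / τ = w + -1 / τ / 2 by field_simp; ring]
  -- Expanding the square `(τ w - 1/2) ^ 2` leaves exactly the prefactors of `jTheta1_eq`.
  have : Complex.exp (Real.pi * Complex.I * τ * w ^ 2) *
      Complex.exp (-Real.pi * Complex.I * (τ * w - 1 / 2) ^ 2 / τ) =
      qpow (-1 / τ) (1 / 8) * Complex.exp (Real.pi * Complex.I * w) := by
    rw [qpow, ← Complex.exp_add, ← Complex.exp_add]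
    congr 1
    field_simp
    ring
  rw [← this]
  ring

theorem theta1_theta2_S_identity (τ : ℂ) (hτ : 0 < τ.im) (w : ℂ) :
    jTheta1 w (-1 / τ) * jTheta2 0 τ =
      Complex.exp ((Real.pi : ℂ) * Complex.I * τ * w ^ 2) * jTheta1 0 (-1 / τ) *
        jTheta2 (τ * w) τ := by
  -- The constant in `jTheta2_S` is eliminated by comparing with the case `w = 0`.
  have h0 := jTheta2_S hτ 0
  have hw := jTheta2_S hτ w
  simp only [mul_zero, ne_eq, OfNat.ofNat_ne_zero, not_false_eq_true, zero_pow, Complex.exp_zero,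
    one_mul] at h0
  rw [h0]
  linear_combination (-jTheta1 0 (-1 / τ)) * hw
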